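/- There exist real numbers r₁, r₂ with 0 < r₁ < r₂ < 1 such that h(r₁) = h(r₂) = 0, and every r > 0 with h(r) = 0 equals r₁ or r₂. In other words, h has exactly two zeros in (0,∞), and both lie in the open interval (0,1). -/

import Mathlib

open MeasureTheory Real Filter

/-- `u r z = √(z(1−rz)/(z+r))`, the real branch of `|w_r|` on `(0, 1/r)`. -/
noncomputable def u (r z : ℝ) : ℝ := Real.sqrt (z * (1 - r * z) / (z + r))

/-- The period function `h` of the candidate maximal Klein bottles. -/
noncomputable def h (r : ℝ) : ℝ :=
  ∫ z in (0:ℝ)..(1/r),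
    -2 * u r z * (-1 + z + r * (2 - 3 * z + r * (-4 + 4 * r + 3 * z))) / (r + z)

/-- `A₁ r = ∫₀^{1/r} u_r(z) dz`. -/
noncomputable def A₁ (r : ℝ) : ℝ := ∫ z in (0:ℝ)..(1/r), u r z

/-- `A₂ r = ∫₀^{1/r} u_r(z)/(z+r) dz`. -/
noncomputable def A₂ (r : ℝ) : ℝ := ∫ z in (0:ℝ)..(1/r), u r z / (z + r)

/-!
The period function is a combination of two elliptic integrals,
`h r = 2 ((1 - r)(1 + r²) A₂ r - (1 - 3r + 3r²) A₁ r)`. The substitution `t = r z` turns `A₁` and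
`A₂` into integrals `∫₀¹ √(t(1 - t)) (t + r²)^(-a) dt`, whose contiguous relation (integration by
parts) closes up under differentiation. It follows that `h` solves the first-order linear equation
`(1 - r)(1 + r²) h' + r h = 2 (1 - 4r + 3r² - r³) A₁ r / r`.
On `(0, 1)` the right-hand side vanishes only where the strictly decreasing cubic does, so Rolle's
theorem for `h` times an integrating factor leaves room for at most two zeros. They exist because
`h` is negative near `0`, positive at `1/2` and negative near `1`; on `[1, ∞)` both terms of `h` are
nonpositive and the second one is negative.
-/

section Rolle

variable {f g G : ℝ → ℝ} {s : Set ℝ}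

/-- Rolle's theorem for `exp G * f`, with `exp G` as integrating factor. -/
lemma exists_deriv_add_mul_eq_zero {a b : ℝ} (hab : a < b) (hfc : ContinuousOn f (Set.Icc a b))
    (hGc : ContinuousOn G (Set.Icc a b)) (hf : ∀ x ∈ Set.Ioo a b, DifferentiableAt ℝ f x)
    (hG : ∀ x ∈ Set.Ioo a b, HasDerivAt G (g x) x) (hfa : f a = 0) (hfb : f b = 0) :
    ∃ c ∈ Set.Ioo a b, deriv f c + g c * f c = 0 := by
  obtain ⟨c, hc, hc0⟩ := exists_hasDerivAt_eq_zero (f := fun x ↦ exp (G x) * f x) hab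
    (hGc.rexp.mul hfc) (by simp only [hfa, hfb, mul_zero])
    (fun x hx ↦ (hG x hx).exp.mul (hf x hx).hasDerivAt)
  refine ⟨c, hc, ?_⟩
  have hfactor : exp (G c) * (deriv f c + g c * f c) = 0 := by linear_combination hc0
  exact (mul_eq_zero.mp hfactor).resolve_left (exp_ne_zero _)

lemma ne_zero_of_subsingleton_deriv_add_mul (hs : s.OrdConnected)
    (hf : ∀ x ∈ s, DifferentiableAt ℝ f x) (hG : ∀ x ∈ s, HasDerivAt G (g x) x)
    (hsub : {x ∈ s | deriv f x + g x * f x = 0}.Subsingleton)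
    {a b c : ℝ} (ha : a ∈ s) (hc : c ∈ s) (hab : a < b) (hbc : b < c)
    (hfa : f a = 0) (hfb : f b = 0) : f c ≠ 0 := by
  intro hfc
  have hb : b ∈ s := hs.out ha hc ⟨hab.le, hbc.le⟩
  have rolle {x y : ℝ} (hx : x ∈ s) (hy : y ∈ s) (hxy : x < y) (hfx : f x = 0) (hfy : f y = 0) :
      ∃ z ∈ Set.Ioo x y, z ∈ {x ∈ s | deriv f x + g x * f x = 0} := by
    have hsubset : Set.Icc x y ⊆ s := hs.out hx hy
    obtain ⟨z, hz, hz0⟩ := exists_deriv_add_mul_eq_zero hxy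
      (fun t ht ↦ (hf t (hsubset ht)).continuousAt.continuousWithinAt)
      (fun t ht ↦ (hG t (hsubset ht)).continuousAt.continuousWithinAt)
      (fun t ht ↦ hf t (hsubset (Set.Ioo_subset_Icc_self ht)))
      (fun t ht ↦ hG t (hsubset (Set.Ioo_subset_Icc_self ht))) hfx hfy
    exact ⟨z, hz, hsubset (Set.Ioo_subset_Icc_self hz), hz0⟩
  obtain ⟨x, hx, hx0⟩ := rolle ha hb hab hfa hfb
  obtain ⟨y, hy, hy0⟩ := rolle hb hc hbc hfb hfc
  exact (hx.2.trans hy.1).ne (hsub hx0 hy0)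

theorem exists_two_zeros_of_subsingleton_deriv_add_mul (hs : s.OrdConnected)
    (hf : ∀ x ∈ s, DifferentiableAt ℝ f x) (hG : ∀ x ∈ s, HasDerivAt G (g x) x)
    (hsub : {x ∈ s | deriv f x + g x * f x = 0}.Subsingleton)
    {p q m : ℝ} (hp : p ∈ s) (hm : m ∈ s) (hpq : p < q) (hqm : q < m)
    (hfp : f p < 0) (hfq : 0 < f q) (hfm : f m < 0) :
    ∃ r₁ ∈ s, ∃ r₂ ∈ s, r₁ < r₂ ∧ f r₁ = 0 ∧ f r₂ = 0 ∧
      ∀ r ∈ s, f r = 0 → r = r₁ ∨ r = r₂ := by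
  have hcont : ContinuousOn f s := fun x hx ↦ (hf x hx).continuousAt.continuousWithinAt
  have hq : q ∈ s := hs.out hp hm ⟨hpq.le, hqm.le⟩
  obtain ⟨r₁, hr₁, hfr₁⟩ :=
    intermediate_value_Ioo hpq.le (hcont.mono (hs.out hp hq)) ⟨hfp, hfq⟩
  obtain ⟨r₂, hr₂, hfr₂⟩ :=
    intermediate_value_Ioo' hqm.le (hcont.mono (hs.out hq hm)) ⟨hfm, hfq⟩
  have hs₁ : r₁ ∈ s := hs.out hp hq (Set.Ioo_subset_Icc_self hr₁)
  have hs₂ : r₂ ∈ s := hs.out hq hm (Set.Ioo_subset_Icc_self hr₂)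
  have h₁₂ : r₁ < r₂ := hr₁.2.trans hr₂.1
  refine ⟨r₁, hs₁, r₂, hs₂, h₁₂, hfr₁, hfr₂, fun r hr hfr ↦ ?_⟩
  have third_ne_zero {a b c : ℝ} :=
    ne_zero_of_subsingleton_deriv_add_mul hs hf hG hsub (a := a) (b := b) (c := c)
  by_contra! hne
  rcases lt_or_gt_of_ne hne.1 with hlt₁ | hgt₁
  · exact third_ne_zero hr hs₂ hlt₁ h₁₂ hfr hfr₁ hfr₂
  rcases lt_or_gt_of_ne hne.2 with hlt₂ | hgt₂
  · exact third_ne_zero hs₁ hs₂ hgt₁ hlt₂ hfr₁ hfr hfr₂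
  · exact third_ne_zero hs₁ hr h₁₂ hgt₂ hfr₁ hfr₂ hfr

end Rolle

section Stieltjes

/-- The generalized Stieltjes transform of order `a` of the density `w` on `[0, 1]`, meant for
`0 < s`. -/
noncomputable def stieltjesIntegral (w : ℝ → ℝ) (a s : ℝ) : ℝ :=
  ∫ t in (0 : ℝ)..1, w t * (t + s) ^ (-a)

variable {w : ℝ → ℝ} {s : ℝ}

lemma intervalIntegrable_mul_add_rpow (hw : IntervalIntegrable w volume 0 1) (hs : 0 < s) (b : ℝ) :
    IntervalIntegrable (fun t ↦ w t * (t + s) ^ b) volume 0 1 := by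
  refine hw.mul_continuousOn (ContinuousOn.rpow_const (by fun_prop) fun t ht ↦ Or.inl ?_)
  rw [Set.uIcc_of_le zero_le_one] at ht
  exact (add_pos_of_nonneg_of_pos ht.1 hs).ne'

theorem hasDerivAt_stieltjesIntegral (hw : IntervalIntegrable w volume 0 1) (a : ℝ) (hs : 0 < s) :
    HasDerivAt (stieltjesIntegral w a) (-a * stieltjesIntegral w (a + 1) s) s := by
  obtain ⟨C, hC⟩ := (isCompact_Icc (a := s / 2) (b := 1 + 2 * s)).exists_bound_of_continuousOn
    (f := fun y : ℝ ↦ y ^ (-(a + 1)))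
    (continuousOn_id.rpow_const fun y hy ↦ Or.inl ((half_pos hs).trans_le hy.1).ne')
  have hderiv := (intervalIntegral.hasDerivAt_integral_of_dominated_loc_of_deriv_le
    (F := fun x t ↦ w t * (t + x) ^ (-a))
    (F' := fun x t ↦ -a * (w t * (t + x) ^ (-(a + 1))))
    (bound := fun t ↦ |a| * (‖w t‖ * C))
    (Ioo_mem_nhds (half_lt_self hs) (lt_two_mul_self hs)) ?_
    (intervalIntegrable_mul_add_rpow hw hs _)
    ((intervalIntegrable_mul_add_rpow hw hs _).const_mul _).aestronglyMeasurable_restrict_uIoc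
    ?_ ((hw.norm.mul_const C).const_mul _) ?_).2
  · rwa [intervalIntegral.integral_const_mul] at hderiv
  · filter_upwards [Ioi_mem_nhds hs] with x hx
    exact (intervalIntegrable_mul_add_rpow hw hx _).aestronglyMeasurable_restrict_uIoc
  · filter_upwards with t ht x hx
    rw [Set.uIoc_of_le zero_le_one] at ht
    have hbound := hC (t + x) ⟨by linarith [ht.1, hx.1], by linarith [ht.2, hx.2]⟩
    rw [norm_mul, norm_mul, norm_neg, norm_eq_abs a]
    gcongr
  · filter_upwards with t ht x hx
    rw [Set.uIoc_of_le zero_le_one] at ht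
    have hne : t + x ≠ 0 := (add_pos ht.1 ((half_pos hs).trans hx.1)).ne'
    refine ((((hasDerivAt_id x).const_add t).rpow_const (p := -a) (Or.inl hne)).const_mul
      (w t)).congr_deriv ?_
    rw [id_eq, neg_add']
    ring

lemma hasDerivAt_stieltjesIntegral_sq (hw : IntervalIntegrable w volume 0 1) (a : ℝ) {r : ℝ}
    (hr : 0 < r) :
    HasDerivAt (fun x ↦ stieltjesIntegral w a (x ^ 2))
      (-(2 * a * r) * stieltjesIntegral w (a + 1) (r ^ 2)) r := by
  refine (HasDerivAt.comp (h := fun x : ℝ ↦ x ^ 2) r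
    (hasDerivAt_stieltjesIntegral hw a (pow_pos hr 2)) (hasDerivAt_pow 2 r)).congr_deriv ?_
  norm_num
  ring

/-- The unnormalized density `t ^ p * (1 - t) ^ q` of the beta distribution on `[0, 1]`, shifted so
that `p` and `q` are the exponents themselves; it is integrable for `-1 < p` and `-1 < q`. -/
noncomputable def betaWeight (p q t : ℝ) : ℝ := t ^ p * (1 - t) ^ q

variable {p q : ℝ}

lemma intervalIntegrable_betaWeight (hp : -1 < p) (hq : -1 < q) :
    IntervalIntegrable (betaWeight p q) volume 0 1 := by
  refine (Complex.betaIntegral_convergent (u := (p + 1 : ℝ)) (v := (q + 1 : ℝ))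
    (by rw [Complex.ofReal_re]; linarith) (by rw [Complex.ofReal_re]; linarith)).norm.congr ?_
  intro t ht
  rw [Set.uIoc_of_le zero_le_one] at ht
  have ht' : 0 ≤ 1 - t := sub_nonneg.mpr ht.2
  have hcast : (t : ℂ) ^ (((p + 1 : ℝ) : ℂ) - 1) * (1 - (t : ℂ)) ^ (((q + 1 : ℝ) : ℂ) - 1) =
      (betaWeight p q t : ℝ) := by
    rw [betaWeight, Complex.ofReal_mul, Complex.ofReal_cpow ht.1.le, Complex.ofReal_cpow ht']
    push_cast
    ring_nf
  simp only [hcast, Complex.norm_real]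
  exact norm_of_nonneg (mul_nonneg (rpow_nonneg ht.1.le p) (rpow_nonneg ht' q))

lemma hasDerivAt_betaWeight_mul_add_rpow (p q a : ℝ) (hs : 0 < s) {t : ℝ}
    (ht : t ∈ Set.Ioo (0 : ℝ) 1) :
    HasDerivAt (fun t ↦ betaWeight (p + 1) (q + 1) t * (t + s) ^ (-a))
      (a * s * (1 + s) * (betaWeight p q t * (t + s) ^ (-(a + 1))) +
        ((p + 1 - a) * (1 + s) + (q + 1 - a) * s) * (betaWeight p q t * (t + s) ^ (-a)) -
        (p + q + 2 - a) * (betaWeight p q t * (t + s) ^ (-(a - 1)))) t := by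
  have ht' : 0 < 1 - t := sub_pos.mpr ht.2
  have hts : 0 < t + s := add_pos ht.1 hs
  have hpow : HasDerivAt (fun t : ℝ ↦ t ^ (p + 1)) ((p + 1) * t ^ p) t := by
    simpa using hasDerivAt_rpow_const (p := p + 1) (Or.inl ht.1.ne')
  have hpow_one_sub : HasDerivAt (fun t : ℝ ↦ (1 - t) ^ (q + 1)) (-((q + 1) * (1 - t) ^ q)) t := by
    refine (((hasDerivAt_id t).const_sub 1).rpow_const (Or.inl ht'.ne')).congr_deriv ?_
    rw [add_sub_cancel_right, id_eq]
    ring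
  have hpow_add : HasDerivAt (fun t ↦ (t + s) ^ (-a)) (-a * (t + s) ^ (-(a + 1))) t := by
    refine (((hasDerivAt_id t).add_const s).rpow_const (Or.inl hts.ne')).congr_deriv ?_
    rw [id_eq, neg_add', one_mul]
  refine ((hpow.mul hpow_one_sub).mul hpow_add).congr_deriv ?_
  have hexp₁ : (t + s) ^ (-a) = (t + s) ^ (-(a + 1)) * (t + s) := by
    rw [← rpow_add_one hts.ne']; ring_nf
  have hexp₂ : (t + s) ^ (-(a - 1)) = (t + s) ^ (-(a + 1)) * (t + s) * (t + s) := by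
    rw [← hexp₁, ← rpow_add_one hts.ne']; ring_nf
  simp only [Pi.mul_apply, betaWeight, hexp₁, hexp₂, rpow_add_one ht.1.ne', rpow_add_one ht'.ne']
  ring

/-- Gauss's contiguous relation for the hypergeometric function, in Euler's integral form. -/
theorem stieltjesIntegral_betaWeight_contiguous (hp : -1 < p) (hq : -1 < q) (a : ℝ) (hs : 0 < s) :
    a * s * (1 + s) * stieltjesIntegral (betaWeight p q) (a + 1) s +
        ((p + 1 - a) * (1 + s) + (q + 1 - a) * s) * stieltjesIntegral (betaWeight p q) a s =
      (p + q + 2 - a) * stieltjesIntegral (betaWeight p q) (a - 1) s := by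
  have hint (b c : ℝ) :
      IntervalIntegrable (fun t ↦ c * (betaWeight p q t * (t + s) ^ b)) volume 0 1 :=
    (intervalIntegrable_mul_add_rpow (intervalIntegrable_betaWeight hp hq) hs b).const_mul c
  have hcont : ContinuousOn (fun t ↦ betaWeight (p + 1) (q + 1) t * (t + s) ^ (-a))
      (Set.Icc 0 1) := by
    refine ContinuousOn.mul (ContinuousOn.mul ?_ ?_) ?_
    · exact continuousOn_id.rpow_const fun t _ ↦ Or.inr (by linarith)
    · exact ContinuousOn.rpow_const (by fun_prop) fun t _ ↦ Or.inr (by linarith)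
    · exact ContinuousOn.rpow_const (by fun_prop)
        fun t ht ↦ Or.inl (add_pos_of_nonneg_of_pos ht.1 hs).ne'
  have hftc := intervalIntegral.integral_eq_sub_of_hasDerivAt_of_le zero_le_one hcont
    (fun t ht ↦ hasDerivAt_betaWeight_mul_add_rpow p q a hs ht)
    (((hint _ _).add (hint _ _)).sub (hint _ _))
  rw [intervalIntegral.integral_sub ((hint _ _).add (hint _ _)) (hint _ _),
    intervalIntegral.integral_add (hint _ _) (hint _ _)] at hftc
  simp only [intervalIntegral.integral_const_mul, betaWeight, sub_self,
    zero_rpow (show p + 1 ≠ 0 by linarith), zero_rpow (show q + 1 ≠ 0 by linarith), mul_zero,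
    zero_mul] at hftc
  simp only [stieltjesIntegral, betaWeight]
  linarith

end Stieltjes

section EllipticIntegrals

variable {r : ℝ}

lemma continuousOn_u (hr : 0 < r) : ContinuousOn (u r) (Set.Icc 0 (1 / r)) := by
  refine ContinuousOn.sqrt (ContinuousOn.div (by fun_prop) (by fun_prop) fun z hz ↦ ?_)
  exact (add_pos_of_nonneg_of_pos hz.1 hr).ne'

lemma continuousOn_u_div_add (hr : 0 < r) :
    ContinuousOn (fun z ↦ u r z / (z + r)) (Set.Icc 0 (1 / r)) :=
  (continuousOn_u hr).div (by fun_prop) fun _ hz ↦ (add_pos_of_nonneg_of_pos hz.1 hr).ne'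

lemma intervalIntegrable_u (hr : 0 < r) : IntervalIntegrable (u r) volume 0 (1 / r) :=
  (continuousOn_u hr).intervalIntegrable_of_Icc (by positivity)

lemma intervalIntegrable_u_div_add (hr : 0 < r) :
    IntervalIntegrable (fun z ↦ u r z / (z + r)) volume 0 (1 / r) :=
  (continuousOn_u_div_add hr).intervalIntegrable_of_Icc (by positivity)

theorem h_eq_A₁_A₂ (hr : 0 < r) :
    h r = 2 * ((1 - r) * (1 + r ^ 2) * A₂ r - (1 - 3 * r + 3 * r ^ 2) * A₁ r) := by
  rw [h, A₁, A₂, ← intervalIntegral.integral_const_mul, ← intervalIntegral.integral_const_mul,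
    ← intervalIntegral.integral_sub ((intervalIntegrable_u_div_add hr).const_mul _)
      ((intervalIntegrable_u hr).const_mul _), ← intervalIntegral.integral_const_mul]
  refine intervalIntegral.integral_congr fun z hz ↦ ?_
  rw [Set.uIcc_of_le (by positivity)] at hz
  have hzr : z + r ≠ 0 := (add_pos_of_nonneg_of_pos hz.1 hr).ne'
  rw [add_comm r z]
  field_simp
  ring

lemma u_div_self (hr : 0 < r) {t : ℝ} (ht : t ∈ Set.Icc (0 : ℝ) 1) :
    u r (t / r) = betaWeight (1 / 2) (1 / 2) t * (t + r ^ 2) ^ (-(1 / 2) : ℝ) := by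
  have ht' : 0 ≤ 1 - t := sub_nonneg.mpr ht.2
  have htr : 0 ≤ t + r ^ 2 := add_nonneg ht.1 (sq_nonneg r)
  have harg : t / r * (1 - r * (t / r)) / (t / r + r) = t * (1 - t) / (t + r ^ 2) := by
    field_simp
  rw [u, harg, sqrt_div (mul_nonneg ht.1 ht'), sqrt_mul ht.1, betaWeight, rpow_neg htr,
    ← sqrt_eq_rpow, ← sqrt_eq_rpow, ← sqrt_eq_rpow, div_eq_mul_inv]

theorem A₁_eq_stieltjesIntegral (hr : 0 < r) :
    A₁ r = r⁻¹ * stieltjesIntegral (betaWeight (1 / 2) (1 / 2)) (1 / 2) (r ^ 2) := by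
  rw [A₁, ← zero_div r, ← intervalIntegral.inv_mul_integral_comp_div, stieltjesIntegral]
  congr 1
  refine intervalIntegral.integral_congr fun t ht ↦ u_div_self hr ?_
  rwa [Set.uIcc_of_le zero_le_one] at ht

theorem A₂_eq_stieltjesIntegral (hr : 0 < r) :
    A₂ r = stieltjesIntegral (betaWeight (1 / 2) (1 / 2)) (3 / 2) (r ^ 2) := by
  rw [A₂, ← zero_div r,
    ← intervalIntegral.inv_mul_integral_comp_div (f := fun z ↦ u r z / (z + r)),
    stieltjesIntegral, ← intervalIntegral.integral_const_mul]
  refine intervalIntegral.integral_congr fun t ht ↦ ?_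
  rw [Set.uIcc_of_le zero_le_one] at ht
  have htr : 0 < t + r ^ 2 := add_pos_of_nonneg_of_pos ht.1 (by positivity)
  have hexp : (t + r ^ 2) ^ (-(1 / 2) : ℝ) = (t + r ^ 2) ^ (-(3 / 2) : ℝ) * (t + r ^ 2) := by
    rw [← rpow_add_one htr.ne']; norm_num
  simp only [u_div_self hr ht, hexp]
  field_simp

theorem hasDerivAt_A₁ (hr : 0 < r) : HasDerivAt A₁ (-A₁ r / r - A₂ r) r := by
  have hw := intervalIntegrable_betaWeight (p := 1 / 2) (q := 1 / 2) (by norm_num) (by norm_num)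
  have hsq := hasDerivAt_stieltjesIntegral_sq hw (1 / 2) hr
  have heq : A₁ =ᶠ[nhds r]
      fun x ↦ x⁻¹ * stieltjesIntegral (betaWeight (1 / 2) (1 / 2)) (1 / 2) (x ^ 2) :=
    eventually_of_mem (Ioi_mem_nhds hr) fun _ hx ↦ A₁_eq_stieltjesIntegral hx
  refine (((hasDerivAt_inv hr.ne').mul hsq).congr_of_eventuallyEq heq).congr_deriv ?_
  rw [A₁_eq_stieltjesIntegral hr, A₂_eq_stieltjesIntegral hr,
    show (1 / 2 + 1 : ℝ) = 3 / 2 by norm_num]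
  field_simp
  ring

theorem hasDerivAt_A₂ (hr : 0 < r) : HasDerivAt A₂ (-3 * A₁ r / (1 + r ^ 2)) r := by
  have hw := intervalIntegrable_betaWeight (p := 1 / 2) (q := 1 / 2) (by norm_num) (by norm_num)
  have hsq := hasDerivAt_stieltjesIntegral_sq hw (3 / 2) hr
  have heq : A₂ =ᶠ[nhds r]
      fun x ↦ stieltjesIntegral (betaWeight (1 / 2) (1 / 2)) (3 / 2) (x ^ 2) :=
    eventually_of_mem (Ioi_mem_nhds hr) fun _ hx ↦ A₂_eq_stieltjesIntegral hx
  have hcontiguous : r ^ 2 * (1 + r ^ 2) *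
      stieltjesIntegral (betaWeight (1 / 2) (1 / 2)) (3 / 2 + 1) (r ^ 2) =
        stieltjesIntegral (betaWeight (1 / 2) (1 / 2)) (1 / 2) (r ^ 2) := by
    have hgauss := stieltjesIntegral_betaWeight_contiguous (p := 1 / 2) (q := 1 / 2)
      (by norm_num) (by norm_num) (3 / 2) (pow_pos hr 2)
    norm_num at hgauss ⊢
    linarith
  refine (hsq.congr_of_eventuallyEq heq).congr_deriv ?_
  rw [A₁_eq_stieltjesIntegral hr, ← hcontiguous]
  field_simp

end EllipticIntegrals

section Bounds

variable {r z : ℝ}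

lemma u_pos (hr : 0 < r) (hz : z ∈ Set.Ioo 0 (1 / r)) : 0 < u r z := by
  have hrz : z * r < 1 := (lt_div_iff₀ hr).mp hz.2
  have hnum : 0 < 1 - r * z := by linarith
  have hzr : 0 < z + r := add_pos hz.1 hr
  exact sqrt_pos.mpr (div_pos (mul_pos hz.1 hnum) hzr)

lemma u_le_one (hr : 0 < r) (hz : 0 ≤ z) : u r z ≤ 1 := by
  refine sqrt_le_one.mpr ((div_le_one (by positivity)).mpr ?_)
  nlinarith [mul_nonneg hr.le (sq_nonneg z)]

lemma mul_one_sub_div_le_u (hr : 0 < r) (hz : z ∈ Set.Icc 0 (1 / r)) :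
    r * z * (1 - r * z) / (1 + r ^ 2) ≤ u r z := by
  have hrz : r * z ≤ 1 := by
    rw [mul_comm]
    exact (le_div_iff₀ hr).mp hz.2
  have hnum : 0 ≤ z * (1 - r * z) := mul_nonneg hz.1 (sub_nonneg.mpr hrz)
  have hzr : 0 < z + r := add_pos_of_nonneg_of_pos hz.1 hr
  calc r * z * (1 - r * z) / (1 + r ^ 2)
      = z * (1 - r * z) / ((1 + r ^ 2) / r) := by field_simp
    _ ≤ z * (1 - r * z) / (z + r) := by
        gcongr
        rw [le_div_iff₀ hr]
        linarith
    _ = u r z ^ 2 := (sq_sqrt (div_nonneg hnum hzr.le)).symm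
    _ ≤ u r z := sq_le (sqrt_nonneg _) (u_le_one hr hz.1)

lemma one_div_le_A₁ (hr : 0 < r) : 1 / (6 * r * (1 + r ^ 2)) ≤ A₁ r := by
  have hint : ∫ z in (0 : ℝ)..(1 / r), r * z * (1 - r * z) / (1 + r ^ 2) =
      1 / (6 * r * (1 + r ^ 2)) := by
    simp_rw [show ∀ z, r * z * (1 - r * z) = r * z - r ^ 2 * z ^ 2 by intro z; ring]
    rw [intervalIntegral.integral_div, intervalIntegral.integral_sub
      (Continuous.intervalIntegrable (by fun_prop) _ _)
      (Continuous.intervalIntegrable (by fun_prop) _ _), intervalIntegral.integral_const_mul,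
      intervalIntegral.integral_const_mul, integral_id, integral_pow]
    push_cast
    field_simp
    ring
  rw [← hint, A₁]
  exact intervalIntegral.integral_mono_on (by positivity)
    (Continuous.intervalIntegrable (by fun_prop) _ _) (intervalIntegrable_u hr)
    fun z hz ↦ mul_one_sub_div_le_u hr hz

lemma A₁_pos (hr : 0 < r) : 0 < A₁ r :=
  lt_of_lt_of_le (by positivity) (one_div_le_A₁ hr)

lemma A₂_le_log (hr : 0 < r) : A₂ r ≤ log (1 + 1 / r ^ 2) := by
  have hint : ∫ z in (0 : ℝ)..(1 / r), (z + r)⁻¹ = log (1 + 1 / r ^ 2) := by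
    rw [intervalIntegral.integral_comp_add_right (fun x ↦ x⁻¹),
      integral_inv_of_pos (by positivity) (by positivity)]
    congr 1
    field_simp
    ring
  rw [← hint, A₂]
  refine intervalIntegral.integral_mono_on (by positivity) (intervalIntegrable_u_div_add hr)
    (ContinuousOn.intervalIntegrable_of_Icc (by positivity) ?_) fun z hz ↦ ?_
  · exact ContinuousOn.inv₀ (by fun_prop) fun z hz ↦ (add_pos_of_nonneg_of_pos hz.1 hr).ne'
  · rw [inv_eq_one_div]
    have hzr : 0 < z + r := add_pos_of_nonneg_of_pos hz.1 hr
    gcongr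
    exact u_le_one hr hz.1

lemma mul_A₂_le_A₁ (hr : 0 < r) : r * A₂ r ≤ A₁ r := by
  rw [A₁, A₂, ← intervalIntegral.integral_const_mul]
  refine intervalIntegral.integral_mono_on (by positivity)
    ((intervalIntegrable_u_div_add hr).const_mul r) (intervalIntegrable_u hr) fun z hz ↦ ?_
  have hzr : 0 < z + r := add_pos_of_nonneg_of_pos hz.1 hr
  have hu : 0 ≤ u r z := sqrt_nonneg _
  rw [← mul_div_assoc, div_le_iff₀ hzr]
  nlinarith [mul_nonneg hu hz.1]

lemma mul_A₁_lt_mul_A₂ (hr : 0 < r) : r * A₁ r < (1 + r ^ 2) * A₂ r := by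
  have hint₁ := (intervalIntegrable_u hr).const_mul r
  have hint₂ := (intervalIntegrable_u_div_add hr).const_mul (1 + r ^ 2)
  rw [← sub_pos, A₁, A₂, ← intervalIntegral.integral_const_mul,
    ← intervalIntegral.integral_const_mul, ← intervalIntegral.integral_sub hint₂ hint₁]
  refine intervalIntegral.intervalIntegral_pos_of_pos_on (hint₂.sub hint₁) (fun z hz ↦ ?_)
    (by positivity)
  have hrz : z * r < 1 := (lt_div_iff₀ hr).mp hz.2
  have hzr : 0 < z + r := add_pos hz.1 hr
  have hfactor : (1 + r ^ 2) * (u r z / (z + r)) - r * u r z =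
      u r z * (1 - z * r) / (z + r) := by
    field_simp
    ring
  rw [hfactor]
  exact div_pos (mul_pos (u_pos hr hz) (sub_pos.mpr hrz)) hzr

end Bounds

section PeriodFunction

variable {r : ℝ}

lemma hasDerivAt_h (hr : 0 < r) : HasDerivAt h (2 * ((1 / r - 3) * A₁ r - r * A₂ r)) r := by
  have hpoly₂ : HasDerivAt (fun x : ℝ ↦ (1 - x) * (1 + x ^ 2)) (-1 + 2 * r - 3 * r ^ 2) r := by
    refine (((hasDerivAt_id r).const_sub 1).mul
      ((hasDerivAt_pow 2 r).const_add 1)).congr_deriv ?_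
    norm_num
    ring
  have hpoly₁ : HasDerivAt (fun x : ℝ ↦ 1 - 3 * x + 3 * x ^ 2) (-3 + 6 * r) r := by
    refine ((((hasDerivAt_id r).const_mul 3).const_sub 1).add
      ((hasDerivAt_pow 2 r).const_mul 3)).congr_deriv ?_
    norm_num
    ring
  have heq : h =ᶠ[nhds r] fun x ↦
      2 * ((1 - x) * (1 + x ^ 2) * A₂ x - (1 - 3 * x + 3 * x ^ 2) * A₁ x) :=
    eventually_of_mem (Ioi_mem_nhds hr) fun _ hx ↦ h_eq_A₁_A₂ hx
  refine ((((hpoly₂.mul (hasDerivAt_A₂ hr)).sub (hpoly₁.mul (hasDerivAt_A₁ hr))).const_mul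
    2).congr_of_eventuallyEq heq).congr_deriv ?_
  field_simp
  ring

theorem mul_deriv_h_add_mul_h (hr : 0 < r) :
    (1 - r) * (1 + r ^ 2) * deriv h r + r * h r =
      2 * (1 - 4 * r + 3 * r ^ 2 - r ^ 3) / r * A₁ r := by
  rw [(hasDerivAt_h hr).deriv, h_eq_A₁_A₂ hr]
  field_simp
  ring

lemma hasDerivAt_log_integratingFactor (hr : r < 1) :
    HasDerivAt (fun x ↦ -(1 / 2) * log (1 - x) + 1 / 4 * log (1 + x ^ 2) - 1 / 2 * arctan x)
      (r / ((1 - r) * (1 + r ^ 2))) r := by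
  have hr' : 0 < 1 - r := sub_pos.mpr hr
  have hsq : 0 < 1 + r ^ 2 := by positivity
  refine ((((((hasDerivAt_id r).const_sub 1).log hr'.ne').const_mul _).add
    ((((hasDerivAt_pow 2 r).const_add 1).log hsq.ne').const_mul _)).sub
    ((hasDerivAt_arctan r).const_mul _)).congr_deriv ?_
  rw [id_eq]
  field_simp
  norm_num
  ring

lemma strictAnti_cubic : StrictAnti fun x : ℝ ↦ 1 - 4 * x + 3 * x ^ 2 - x ^ 3 := by
  intro x y hxy
  have hquot : 0 < 4 - 3 * (x + y) + (x ^ 2 + x * y + y ^ 2) := by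
    nlinarith [sq_nonneg (x - y), sq_nonneg (x + y - 2)]
  linear_combination mul_pos (sub_pos.mpr hxy) hquot

lemma subsingleton_deriv_h_add_mul_h_eq_zero :
    {x ∈ Set.Ioo (0 : ℝ) 1 |
      deriv h x + x / ((1 - x) * (1 + x ^ 2)) * h x = 0}.Subsingleton := by
  have cubic_eq_zero {x : ℝ} (hx : x ∈ Set.Ioo (0 : ℝ) 1)
      (hx0 : deriv h x + x / ((1 - x) * (1 + x ^ 2)) * h x = 0) :
      1 - 4 * x + 3 * x ^ 2 - x ^ 3 = 0 := by
    have hx' : 0 < 1 - x := sub_pos.mpr hx.2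
    have hxne : x ≠ 0 := hx.1.ne'
    have hode := mul_deriv_h_add_mul_h hx.1
    have hlhs : (1 - x) * (1 + x ^ 2) * deriv h x + x * h x = 0 := by
      field_simp at hx0
      linear_combination hx0
    rw [hlhs, eq_comm, mul_eq_zero_iff_right (A₁_pos hx.1).ne'] at hode
    simpa [hxne] using hode
  intro x hx y hy
  exact strictAnti_cubic.injective
    ((cubic_eq_zero hx.1 hx.2).trans (cubic_eq_zero hy.1 hy.2).symm)

lemma h_one_div_hundred_neg : h (1 / 100) < 0 := by
  have hA₁ : 16 ≤ A₁ (1 / 100) :=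
    le_trans (by norm_num) (one_div_le_A₁ (r := 1 / 100) (by norm_num))
  have hA₂ : A₂ (1 / 100) ≤ 10 :=
    calc A₂ (1 / 100) ≤ log (1 + 1 / (1 / 100) ^ 2) := A₂_le_log (by norm_num)
      _ ≤ log (2 ^ 14) := log_le_log (by norm_num) (by norm_num)
      _ = 14 * log 2 := by rw [log_pow]; norm_num
      _ ≤ 10 := by linarith [log_two_lt_d9]
  rw [h_eq_A₁_A₂ (by norm_num)]
  linarith

lemma h_half_pos : 0 < h (1 / 2) := by
  -- As `1 - 3r + 3r² = r(1 - r) + (1 - 2r)²`, the bound yields `0 < h r` at `r = 1 / 2` only.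
  rw [h_eq_A₁_A₂ (by norm_num)]
  linarith [mul_A₁_lt_mul_A₂ (r := 1 / 2) (by norm_num)]

lemma h_nine_tenths_neg : h (9 / 10) < 0 := by
  rw [h_eq_A₁_A₂ (by norm_num)]
  linarith [mul_A₂_le_A₁ (r := 9 / 10) (by norm_num), A₁_pos (r := 9 / 10) (by norm_num)]

lemma h_neg_of_one_le (hr : 1 ≤ r) : h r < 0 := by
  have hr₀ : 0 < r := one_pos.trans_le hr
  have hA₁ : 0 < A₁ r := A₁_pos hr₀
  have hA₂ : 0 < A₂ r := by
    have hlt := (mul_pos hr₀ hA₁).trans (mul_A₁_lt_mul_A₂ hr₀)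
    exact pos_of_mul_pos_right hlt (by positivity)
  have hcoeff₁ : 0 < 1 - 3 * r + 3 * r ^ 2 := by nlinarith
  have hcoeff₂ : (1 - r) * (1 + r ^ 2) ≤ 0 :=
    mul_nonpos_of_nonpos_of_nonneg (sub_nonpos.mpr hr) (by positivity)
  rw [h_eq_A₁_A₂ hr₀]
  linarith [mul_pos hcoeff₁ hA₁, mul_nonpos_of_nonpos_of_nonneg hcoeff₂ hA₂.le]

end PeriodFunction

theorem stmt_16 :
    ∃ r₁ r₂ : ℝ, 0 < r₁ ∧ r₁ < r₂ ∧ r₂ < 1 ∧ h r₁ = 0 ∧ h r₂ = 0 ∧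
      ∀ r : ℝ, 0 < r → h r = 0 → r = r₁ ∨ r = r₂ := by
  obtain ⟨r₁, hr₁, r₂, hr₂, hlt, hzero₁, hzero₂, huniq⟩ :=
    exists_two_zeros_of_subsingleton_deriv_add_mul (s := Set.Ioo 0 1) Set.ordConnected_Ioo
      (fun r hr ↦ (hasDerivAt_h hr.1).differentiableAt)
      (fun r hr ↦ hasDerivAt_log_integratingFactor hr.2) subsingleton_deriv_h_add_mul_h_eq_zero
      (p := 1 / 100) (q := 1 / 2) (m := 9 / 10) (by norm_num) (by norm_num) (by norm_num)
      (by norm_num) h_one_div_hundred_neg h_half_pos h_nine_tenths_neg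
  refine ⟨r₁, r₂, hr₁.1, hlt, hr₂.2, hzero₁, hzero₂, fun r hr hzero ↦ ?_⟩
  have hr_lt_one : r < 1 := by
    by_contra! hge
    exact (h_neg_of_one_le hge).ne hzero
  exact huniq r ⟨hr, hr_lt_one⟩ hzero
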